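/- Let r > 1, fix j ∈ {1,2} and shifts γ = (γ₁, γ₂) ∈ Γ₁ × Γ₂. Assume u_k(·, α_k) ∈ L^∞(ℝ²; ℝ³) is 𝓡_𝓜-periodic and v_{(α₁,α₂)} ∈ L^∞_{2r}(ℝ² × [−L_u^z, L_u^z]) is even for all α_k ∈ 𝓐_k. Then Φ̄^{(inter)}_{j,γ}[u] ∈ L¹(Γ_𝓜), and for every G_𝓜 ∈ 𝓡_𝓜* its Fourier coefficient equals (2|Γ_𝓜|)^{−1} Σ_{α₁,α₂} ∫_{ℝ²} e^{−i G_𝓜 · (A_j x + γ_j)} v_{(α₁,α₂)}(A₁x + γ₁ + τ₁^{(α₁)} + u₁(A₁x + γ₁, α₁) − A₂x − γ₂ − τ₂^{(α₂)} − u₂(A₂x + γ₂, α₂)) dx. In particular, ⨍_{Γ_𝓜} Φ̄^{(inter)}_{1,γ}[u](x) dx = ⨍_{Γ_𝓜} Φ̄^{(inter)}_{2,γ}[u](x) dx. -/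

import Mathlib

open scoped Real BigOperators
open MeasureTheory Filter Topology Matrix

noncomputable section

/-- The 2×2 rotation matrix through angle `φ`. -/
def Rot (φ : ℝ) : Matrix (Fin 2) (Fin 2) ℝ :=
  !![Real.cos φ, -Real.sin φ; Real.sin φ, Real.cos φ]

/-- Euclidean norm on `ℝ²`. -/
def norm2 (v : Fin 2 → ℝ) : ℝ := Real.sqrt (v 0 ^ 2 + v 1 ^ 2)

/-- Euclidean norm on `ℝ³`. -/
def norm3 (v : Fin 3 → ℝ) : ℝ := Real.sqrt (v 0 ^ 2 + v 1 ^ 2 + v 2 ^ 2)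

/-- Cast an integer vector to a real vector. -/
def iv (n : Fin 2 → ℤ) : Fin 2 → ℝ := fun i => (n i : ℝ)

/-- The lattice `M ℤ²`. -/
def lat (M : Matrix (Fin 2) (Fin 2) ℝ) : Set (Fin 2 → ℝ) :=
  {v | ∃ n : Fin 2 → ℤ, v = M.mulVec (iv n)}

/-- The unit cell `M [0,1)²`. -/
def cell (M : Matrix (Fin 2) (Fin 2) ℝ) : Set (Fin 2 → ℝ) :=
  {v | ∃ t : Fin 2 → ℝ, (∀ i, t i ∈ Set.Ico (0 : ℝ) 1) ∧ v = M.mulVec t}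

/-- The reciprocal matrix `2π M⁻ᵀ`. -/
def recip (M : Matrix (Fin 2) (Fin 2) ℝ) : Matrix (Fin 2) (Fin 2) ℝ :=
  (2 * π) • (M⁻¹)ᵀ

/-- A pair of lattices with reciprocal-lattice matrices `B1`, `B2` is incommensurate iff
`G₁ + G₂ = 0` with `G_k` in the respective reciprocal lattice implies `G₁ = G₂ = 0`. -/
def Incommensurate (B1 B2 : Matrix (Fin 2) (Fin 2) ℝ) : Prop :=
  ∀ G1 ∈ lat B1, ∀ G2 ∈ lat B2, G1 + G2 = 0 → G1 = 0 ∧ G2 = 0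

/-- Euclidean distance from `v ∈ ℝ²` to the integer lattice `ℤ²`. -/
def distZ2 (v : Fin 2 → ℝ) : ℝ := ⨅ m : Fin 2 → ℤ, norm2 (v - iv m)

/-- `θ` is a `(q,K,σ)`-Diophantine 2D rotation. -/
def IsDiophantine (A : Matrix (Fin 2) (Fin 2) ℝ) (q K σ θ : ℝ) : Prop :=
  ∀ n : Fin 2 → ℤ, n ≠ 0 →
    K / norm2 (iv n) ^ (2 * σ) ≤ distZ2 ((q • (Aᵀ * Rot θ * (A⁻¹)ᵀ)).mulVec (iv n)) ∧
    K / norm2 (iv n) ^ (2 * σ) ≤ distZ2 ((q⁻¹ • (Aᵀ * Rot (-θ) * (A⁻¹)ᵀ)).mulVec (iv n))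

/-- The moiré length scale ratio `ρ_𝓜`. -/
def rhoM (q θ : ℝ) : ℝ :=
  (Real.sqrt ((Real.sqrt q - (Real.sqrt q)⁻¹) ^ 2 + 4 * Real.sin (θ / 2) ^ 2))⁻¹

/-- Riemann zeta function (for real `s > 1`, via its Dirichlet series). -/
def zetaR (s : ℝ) : ℝ := ∑' n : ℕ, ((n : ℝ) + 1) ^ (-s)

/-- Operator (spectral) norm of a 2×2 real matrix w.r.t. the Euclidean norm. -/
def opNorm2 (M : Matrix (Fin 2) (Fin 2) ℝ) : ℝ :=
  ⨆ x : {x : Fin 2 → ℝ // norm2 x ≤ 1}, norm2 (M.mulVec x.1)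

/-- Embedding `ℝ² ↪ ℝ³`, `x ↦ (x, 0)`. -/
def emb (x : Fin 2 → ℝ) : Fin 3 → ℝ := ![x 0, x 1, 0]

/-- Japanese bracket `⟨x⟩ = (1 + |x|²)^{1/2}` on `ℝ³`. -/
def jap3 (x : Fin 3 → ℝ) : ℝ := Real.sqrt (1 + norm3 x ^ 2)

/-- The region `ℝ² × [−L, L] ⊆ ℝ³`. -/
def slab (L : ℝ) : Set (Fin 3 → ℝ) := {x | x 2 ∈ Set.Icc (-L) L}

/-- Euclidean inner product on `ℝ²`. -/
def dot2 (a b : Fin 2 → ℝ) : ℝ := ∑ i, a i * b i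

/-- The index box `⟦−N, N⟧²`. -/
def box (N : ℕ) : Finset (Fin 2 → ℤ) :=
  Finset.Icc (fun _ => -(N : ℤ)) (fun _ => (N : ℤ))

/-- The normalized Dirichlet kernel `Δ_N^j` of the lattice `A_j ℤ²`. -/
def Dir (Aj : Matrix (Fin 2) (Fin 2) ℝ) (N : ℕ) (G : Fin 2 → ℝ) : ℂ :=
  (((2 * N + 1 : ℝ)) ^ 2)⁻¹ •
    ∑ n ∈ box N, Complex.exp (Complex.I * (dot2 G (Aj.mulVec (iv n)) : ℝ))

/-- The sublattice-averaged interlayer site potential `Ψ_j[u](x,y)` for pair potentials,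
with layer `a` playing the role of layer `j` and layer `b` that of layer `3−j`. -/
def PsiPair {𝓐a 𝓐b : Type} [Fintype 𝓐a] [Fintype 𝓐b]
    (Aa Ab : Matrix (Fin 2) (Fin 2) ℝ)
    (w : 𝓐a → 𝓐b → (Fin 3 → ℝ) → ℝ)
    (τa : 𝓐a → Fin 2 → ℝ) (τb : 𝓐b → Fin 2 → ℝ)
    (ua : (Fin 2 → ℝ) → 𝓐a → Fin 3 → ℝ) (ub : (Fin 2 → ℝ) → 𝓐b → Fin 3 → ℝ)
    (x y : Fin 2 → ℝ) : ℝ :=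
  (2 * |Aa.det|)⁻¹ *
    ∑ αa : 𝓐a, ∑ αb : 𝓐b, ∑' n : Fin 2 → ℤ,
      w αa αb (emb y - emb (Ab.mulVec (iv n)) + emb (τa αa) - emb (τb αb) +
        ua x αa - ub (x - y + Ab.mulVec (iv n)) αb)

theorem mul_inv_vec (M : Matrix (Fin 2) (Fin 2) ℝ) (hM : IsUnit M.det) (x : Fin 2 → ℝ) :
    M.mulVec (M⁻¹.mulVec x) = x := by
  rw [Matrix.mulVec_mulVec, Matrix.mul_nonsing_inv _ hM, Matrix.one_mulVec]

theorem inv_mul_vec (M : Matrix (Fin 2) (Fin 2) ℝ) (hM : IsUnit M.det) (x : Fin 2 → ℝ) :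
    M⁻¹.mulVec (M.mulVec x) = x := by
  rw [Matrix.mulVec_mulVec, Matrix.nonsing_inv_mul _ hM, Matrix.one_mulVec]

theorem continuous_mulVec' (M : Matrix (Fin 2) (Fin 2) ℝ) :
    Continuous fun x : Fin 2 → ℝ => M.mulVec x := by fun_prop

/-- index of the lattice cell containing `x` -/
def gfl (M : Matrix (Fin 2) (Fin 2) ℝ) (x : Fin 2 → ℝ) : Fin 2 → ℤ := fun i => ⌊M⁻¹.mulVec x i⌋

theorem measurable_gfl (M : Matrix (Fin 2) (Fin 2) ℝ) : Measurable (gfl M) := by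
  refine measurable_pi_lambda _ fun i => ?_
  exact Int.measurable_floor.comp ((measurable_pi_apply i).comp (continuous_mulVec' M⁻¹).measurable)

theorem cell_eq (M : Matrix (Fin 2) (Fin 2) ℝ) (hM : IsUnit M.det) :
    cell M = gfl M ⁻¹' {0} := by
  ext x
  have h0 : gfl M x = 0 ↔ ∀ i, M⁻¹.mulVec x i ∈ Set.Ico (0 : ℝ) 1 := by
    rw [funext_iff]
    exact forall_congr' fun i => Int.floor_eq_zero_iff
  rw [Set.mem_preimage, Set.mem_singleton_iff, h0]
  constructor
  · rintro ⟨t, ht, rfl⟩ i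
    rw [inv_mul_vec M hM]; exact ht i
  · intro h
    exact ⟨M⁻¹.mulVec x, h, (mul_inv_vec M hM x).symm⟩

theorem gfl_add (M : Matrix (Fin 2) (Fin 2) ℝ) (hM : IsUnit M.det) (x : Fin 2 → ℝ)
    (n : Fin 2 → ℤ) : gfl M (x + M.mulVec (iv n)) = gfl M x + n := by
  ext i
  rw [gfl, Matrix.mulVec_add, inv_mul_vec M hM]
  exact Int.floor_add_intCast _ _

theorem volume_cell (M : Matrix (Fin 2) (Fin 2) ℝ) : volume.real (cell M) = |M.det| := by
  have h : cell M = Matrix.toLin' M '' (Set.pi Set.univ fun _ => Set.Ico (0 : ℝ) 1) := by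
    ext x
    simp only [cell, Set.mem_ofPred_eq, Set.mem_image, Set.mem_univ_pi, Matrix.toLin'_apply]
    exact exists_congr fun t => and_congr_right fun _ => eq_comm
  rw [Measure.real, h, Measure.addHaar_image_linearMap, LinearMap.det_toLin', Real.volume_pi_Ico]
  simp

theorem unfold_lint (M : Matrix (Fin 2) (Fin 2) ℝ) (hM : IsUnit M.det)
    (f : (Fin 2 → ℝ) → ENNReal) :
    ∑' n, ∫⁻ x in cell M, f (x + M.mulVec (iv n)) = ∫⁻ x, f x := by
  rw [← setLIntegral_univ f, show (Set.univ : Set (Fin 2 → ℝ)) = ⋃ n, gfl M ⁻¹' {n} by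
    ext x; simp, lintegral_iUnion (fun n => measurable_gfl M (measurableSet_singleton n))]
  · refine tsum_congr fun n => ?_
    rw [← (measurePreserving_add_right volume (M.mulVec (iv n))).setLIntegral_comp_preimage_emb
      (measurableEmbedding_addRight _) f (gfl M ⁻¹' {n})]
    congr 2
    rw [cell_eq M hM]; ext x
    rw [Set.mem_preimage, Set.mem_preimage, Set.mem_preimage, gfl_add M hM]
    simp only [Set.mem_singleton_iff, add_eq_right]
  · intro a b hab
    exact Disjoint.preimage _ (by simpa using hab)

theorem unfold_int (M : Matrix (Fin 2) (Fin 2) ℝ) (hM : IsUnit M.det)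
    {E : Type*} [NormedAddCommGroup E] [NormedSpace ℝ E] [CompleteSpace E]
    (f : (Fin 2 → ℝ) → E) (hf : Integrable f) :
    ∑' n, ∫ x in cell M, f (x + M.mulVec (iv n)) = ∫ x, f x := by
  rw [← setIntegral_univ, show (Set.univ : Set (Fin 2 → ℝ)) = ⋃ n, gfl M ⁻¹' {n} by
    ext x; simp, integral_iUnion (fun n => measurable_gfl M (measurableSet_singleton n)) _ hf.integrableOn]
  · refine tsum_congr fun n => ?_
    rw [← (measurePreserving_add_right volume (M.mulVec (iv n))).setIntegral_preimage_emb
      (measurableEmbedding_addRight _) f (gfl M ⁻¹' {n})]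
    congr 2
    rw [cell_eq M hM]; ext x
    rw [Set.mem_preimage, Set.mem_preimage, Set.mem_preimage, gfl_add M hM]
    simp only [Set.mem_singleton_iff, add_eq_right]
  · intro a b hab
    exact Disjoint.preimage _ (by simpa using hab)

theorem unfold_main (M : Matrix (Fin 2) (Fin 2) ℝ) (hM : IsUnit M.det)
    (f : (Fin 2 → ℝ) → ℂ) (hfm : Measurable f) (hf : Integrable f) :
    IntegrableOn (fun x => ∑' n, f (x + M.mulVec (iv n))) (cell M) ∧
    ∫ x in cell M, ∑' n, f (x + M.mulVec (iv n)) = ∫ x, f x := by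
  have hm : ∀ n : Fin 2 → ℤ, Measurable fun x => f (x + M.mulVec (iv n)) := fun n =>
    hfm.comp (measurable_id.add_const _)
  have hfin : ∑' n, ∫⁻ x in cell M, ‖f (x + M.mulVec (iv n))‖ₑ ≠ ⊤ := by
    rw [unfold_lint M hM (fun x => ‖f x‖ₑ)]
    exact hf.2.ne
  constructor
  · refine ⟨(Measurable.tsum hm).aestronglyMeasurable, ?_⟩
    refine lt_of_le_of_lt (lintegral_mono fun x => enorm_tsum_le_tsum_enorm) ?_
    rw [lintegral_tsum fun n => (hm n).enorm.aemeasurable]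
    exact lt_top_iff_ne_top.2 hfin
  · rw [integral_tsum (fun n => (hm n).aestronglyMeasurable) hfin, unfold_int M hM f hf]

theorem affine_int (M : Matrix (Fin 2) (Fin 2) ℝ) (hM : IsUnit M.det) (c : Fin 2 → ℝ)
    (f : (Fin 2 → ℝ) → ℂ) :
    ∫ x, f (M.mulVec x + c) = ((|M.det|⁻¹ : ℝ) : ℂ) * ∫ x, f x := by
  have e := integral_add_right_eq_self (μ := volume) f c
  rw [← e]
  have hemb : MeasurableEmbedding (Matrix.toLin' M) := by
    have : Function.Injective (Matrix.toLin' M) := fun x y h => by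
      have := congrArg (M⁻¹.mulVec) h
      simpa only [Matrix.toLin'_apply, inv_mul_vec M hM] using this
    exact (continuous_mulVec' M).measurableEmbedding this
  have h2 := hemb.integral_map (μ := volume) (fun x => f (x + c))
  rw [Real.map_matrix_volume_pi_eq_smul_volume_pi hM.ne_zero, integral_smul_measure] at h2
  simp only [Matrix.toLin'_apply] at h2
  rw [← h2, ENNReal.toReal_ofReal (abs_nonneg _), abs_inv, Complex.real_smul]

theorem affine_integrable (M : Matrix (Fin 2) (Fin 2) ℝ) (hM : IsUnit M.det) (c : Fin 2 → ℝ)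
    (f : (Fin 2 → ℝ) → ℝ) (hf : Integrable f) :
    Integrable fun x => f (M.mulVec x + c) := by
  have hf := hf.comp_add_right c
  have hemb : MeasurableEmbedding (Matrix.toLin' M) := by
    have : Function.Injective (Matrix.toLin' M) := fun x y h => by
      have := congrArg (M⁻¹.mulVec) h
      simpa only [Matrix.toLin'_apply, inv_mul_vec M hM] using this
    exact (continuous_mulVec' M).measurableEmbedding this
  have h2 := hemb.integrable_map_iff (μ := volume) (g := fun x => f (x + c))
  rw [Real.map_matrix_volume_pi_eq_smul_volume_pi hM.ne_zero] at h2
  exact h2.1 (hf.smul_measure ENNReal.ofReal_ne_top)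

theorem emb_sub (x y : Fin 2 → ℝ) : emb (x - y) = emb x - emb y := by
  ext i; fin_cases i <;> simp [emb]

theorem emb_meas : Measurable emb := by
  refine measurable_pi_lambda _ fun i => ?_
  fin_cases i <;> simp [emb] <;> fun_prop

theorem abs_le_norm3 (z : Fin 3 → ℝ) (i : Fin 3) : |z i| ≤ norm3 z := by
  apply Real.abs_le_sqrt
  fin_cases i <;> simp <;> nlinarith [sq_nonneg (z 0), sq_nonneg (z 1), sq_nonneg (z 2)]

theorem pert_integrable (D : Matrix (Fin 2) (Fin 2) ℝ) (hD : IsUnit D.det) (c : Fin 2 → ℝ)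
    (r : ℝ) (hr : 1 < r) (w : (Fin 3 → ℝ) → ℝ) (hw : Measurable w)
    (h : (Fin 2 → ℝ) → Fin 3 → ℝ) (hh : Measurable h) (K L C : ℝ)
    (hK0 : ∀ x, |h x 0| ≤ K) (hK1 : ∀ x, |h x 1| ≤ K) (hL : ∀ x, |h x 2| ≤ L)
    (hC : ∀ z ∈ slab L, jap3 z ^ (2 * r) * |w z| ≤ C) :
    Measurable (fun x => w (emb (D.mulVec x + c) + h x)) ∧
    Integrable (fun x => w (emb (D.mulVec x + c) + h x)) := by
  have hm : Measurable (fun x => w (emb (D.mulVec x + c) + h x)) :=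
    hw.comp ((emb_meas.comp ((continuous_mulVec' D).measurable.add_const c)).add hh)
  refine ⟨hm, ?_⟩
  have hKn : 0 ≤ K := (abs_nonneg _).trans (hK0 0)
  have hfr : (Module.finrank ℝ (Fin 2 → ℝ) : ℝ) < 2 * r := by simp; linarith
  have hg := affine_integrable D hD c _
    ((integrable_one_add_norm (μ := (volume : Measure (Fin 2 → ℝ))) hfr).const_mul
      (C * (2 + K) ^ (2 * r)))
  refine hg.mono' hm.aestronglyMeasurable (Eventually.of_forall fun x => ?_)
  set y := D.mulVec x + c with hy
  set z := emb y + h x with hz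
  have hz2 : z ∈ slab L := by
    have : z 2 = h x 2 := by rw [hz, Pi.add_apply]; simp [emb]
    rw [slab, Set.mem_ofPred_eq, this]; exact abs_le.1 (hL x)
  have hCz := hC z hz2
  have hj1 : 1 ≤ jap3 z := by
    rw [jap3, Real.one_le_sqrt]; nlinarith [sq_nonneg (norm3 z)]
  have hj2 : norm3 z ≤ jap3 z := by
    apply Real.le_sqrt_of_sq_le; linarith
  have hyn : ‖y‖ ≤ norm3 z + K := by
    have hn : 0 ≤ norm3 z := Real.sqrt_nonneg _
    rw [pi_norm_le_iff_of_nonneg (by linarith)]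
    intro i
    rw [Real.norm_eq_abs]
    fin_cases i
    · have e : y 0 = z 0 - h x 0 := by rw [hz, Pi.add_apply]; simp [emb]
      show |y 0| ≤ _
      rw [e]
      exact (abs_sub _ _).trans (add_le_add (abs_le_norm3 z 0) (hK0 x))
    · have e : y 1 = z 1 - h x 1 := by rw [hz, Pi.add_apply]; simp [emb]
      show |y 1| ≤ _
      rw [e]
      exact (abs_sub _ _).trans (add_le_add (abs_le_norm3 z 1) (hK1 x))
  have h1 : 1 + ‖y‖ ≤ (2 + K) * jap3 z := by nlinarith
  have hpos : 0 < 1 + ‖y‖ := by positivity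
  have h2 : (1 + ‖y‖) ^ (2 * r) ≤ (2 + K) ^ (2 * r) * jap3 z ^ (2 * r) := by
    rw [← Real.mul_rpow (by linarith) (by linarith)]
    exact Real.rpow_le_rpow hpos.le h1 (by linarith)
  rw [Real.norm_eq_abs, Real.rpow_neg hpos.le, ← div_eq_mul_inv, le_div_iff₀ (by positivity)]
  calc |w z| * (1 + ‖y‖) ^ (2 * r) ≤ |w z| * ((2 + K) ^ (2 * r) * jap3 z ^ (2 * r)) := by gcongr
    _ = (jap3 z ^ (2 * r) * |w z|) * (2 + K) ^ (2 * r) := by ring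
    _ ≤ C * (2 + K) ^ (2 * r) := by gcongr

theorem dot2_add (a b c : Fin 2 → ℝ) : dot2 a (b + c) = dot2 a b + dot2 a c := by
  simp [dot2]; ring

theorem measurable_dot2 (a : Fin 2 → ℝ) : Measurable (dot2 a) := by
  unfold dot2; fun_prop

theorem core {𝓐a 𝓐b : Type} [Fintype 𝓐a] [Fintype 𝓐b]
    (r : ℝ) (hr : 1 < r)
    (Aa Ab D M B : Matrix (Fin 2) (Fin 2) ℝ) (hAa : IsUnit Aa.det)
    (hD : D = 1 - Ab * Aa⁻¹) (hDu : IsUnit D.det) (hM : IsUnit M.det)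
    (e : (Fin 2 → ℤ) ≃ (Fin 2 → ℤ))
    (he : ∀ n, D.mulVec (M.mulVec (iv (e n))) = -(Ab.mulVec (iv n)))
    (hB : ∀ m n, ∃ k : ℤ, dot2 (B.mulVec (iv m)) (M.mulVec (iv n)) = k * (2 * π))
    (τa : 𝓐a → Fin 2 → ℝ) (τb : 𝓐b → Fin 2 → ℝ)
    (ua : (Fin 2 → ℝ) → 𝓐a → Fin 3 → ℝ) (ub : (Fin 2 → ℝ) → 𝓐b → Fin 3 → ℝ)
    (γa γb : Fin 2 → ℝ)
    (huam : ∀ α, Measurable fun x => ua x α)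
    (hubm : ∀ α, Measurable fun x => ub x α)
    (hua : ∃ C : ℝ, ∀ x α, norm3 (ua x α) ≤ C)
    (hub : ∃ C : ℝ, ∀ x α, norm3 (ub x α) ≤ C)
    (huap : ∀ (x : Fin 2 → ℝ), ∀ rM ∈ lat M, ∀ α, ua (x + rM) α = ua x α)
    (hubp : ∀ (x : Fin 2 → ℝ), ∀ rM ∈ lat M, ∀ α, ub (x + rM) α = ub x α)
    (w : 𝓐a → 𝓐b → (Fin 3 → ℝ) → ℝ) (hwm : ∀ a b, Measurable (w a b)) (L : ℝ)
    (hL : ∀ x y a b, |ua x a 2| + |ub y b 2| ≤ L)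
    (hw : ∀ a b, ∃ C : ℝ, ∀ z ∈ slab L, jap3 z ^ (2 * r) * |w a b z| ≤ C) :
    IntegrableOn (fun x => PsiPair Aa Ab w τa τb ua ub x
        (D.mulVec x + (Ab * Aa⁻¹).mulVec γa - γb)) (cell M) ∧
    (∀ m : Fin 2 → ℤ,
      (⨍ x in cell M,
          Complex.exp (-(dot2 (B.mulVec (iv m)) x : ℝ) * Complex.I) *
            (PsiPair Aa Ab w τa τb ua ub x
              (D.mulVec x + (Ab * Aa⁻¹).mulVec γa - γb) : ℂ)) =
        ((2 * |M.det| : ℝ) : ℂ)⁻¹ *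
          ∑ αa : 𝓐a, ∑ αb : 𝓐b,
            ∫ x : Fin 2 → ℝ,
              Complex.exp (-(dot2 (B.mulVec (iv m)) (Aa.mulVec x + γa) : ℝ) * Complex.I) *
                (w αa αb
                  (emb (Aa.mulVec x + γa) + emb (τa αa) + ua (Aa.mulVec x + γa) αa -
                    emb (Ab.mulVec x + γb) - emb (τb αb) - ub (Ab.mulVec x + γb) αb) : ℂ)) := by
  set c := (Ab * Aa⁻¹).mulVec γa - γb with hc
  let Y : (Fin 2 → ℝ) → (Fin 2 → ℝ) := fun x => D.mulVec x + c
  let h : 𝓐a → 𝓐b → (Fin 2 → ℝ) → (Fin 3 → ℝ) := fun a b x =>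
    emb (τa a) - emb (τb b) + ua x a - ub (x - Y x) b
  let f : 𝓐a → 𝓐b → (Fin 2 → ℝ) → ℝ := fun a b x => w a b (emb (Y x) + h a b x)
  have hYm : Measurable Y := (continuous_mulVec' D).measurable.add_const c
  have hhm : ∀ a b, Measurable (h a b) := fun a b =>
    ((huam a).const_add _).sub ((hubm b).comp (measurable_id.sub hYm))
  obtain ⟨Ca, hCa⟩ := hua
  obtain ⟨Cb, hCb⟩ := hub
  have hf : ∀ a b, Measurable (f a b) ∧ Integrable (f a b) := by
    intro a b
    obtain ⟨C, hC⟩ := hw a b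
    have hgen : ∀ i x, |h a b x i| ≤ norm3 (emb (τa a)) + norm3 (emb (τb b)) + Ca + Cb := by
      intro i x
      have h1 := abs_le_norm3 (emb (τa a)) i
      have h2 := abs_le_norm3 (emb (τb b)) i
      have h3 := (abs_le_norm3 (ua x a) i).trans (hCa x a)
      have h4 := (abs_le_norm3 (ub (x - Y x) b) i).trans (hCb (x - Y x) b)
      simp only [h, Pi.add_apply, Pi.sub_apply]
      rw [abs_le] at *
      constructor <;> linarith [h1.1, h1.2, h2.1, h2.2, h3.1, h3.2, h4.1, h4.2]
    refine pert_integrable D hDu c r hr (w a b) (hwm a b) (h a b) (hhm a b) _ L C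
      (hgen 0) (hgen 1) (fun x => ?_) hC
    refine le_trans ?_ (hL x (x - Y x) a b)
    simp only [h, Pi.add_apply, Pi.sub_apply]
    have : ∀ t, emb t 2 = 0 := fun t => by simp [emb]
    rw [this, this, sub_zero, zero_add]
    exact abs_sub _ _
  -- periodization
  have hPsi : ∀ x, PsiPair Aa Ab w τa τb ua ub x (D.mulVec x + (Ab * Aa⁻¹).mulVec γa - γb) =
      (2 * |Aa.det|)⁻¹ * ∑ a, ∑ b, ∑' n, f a b (x + M.mulVec (iv n)) := by
    intro x
    have hYx : D.mulVec x + (Ab * Aa⁻¹).mulVec γa - γb = Y x := by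
      simp only [Y, hc]; abel
    rw [hYx, PsiPair]
    congr 1
    refine Finset.sum_congr rfl fun a _ => Finset.sum_congr rfl fun b _ => ?_
    rw [← e.tsum_eq (fun n => f a b (x + M.mulVec (iv n)))]
    refine tsum_congr fun n => ?_
    have hYn : Y (x + M.mulVec (iv (e n))) = Y x - Ab.mulVec (iv n) := by
      simp only [Y, Matrix.mulVec_add, he]; abel
    simp only [f, h]
    rw [hYn, emb_sub, huap _ _ ⟨e n, rfl⟩,
      show x + M.mulVec (iv (e n)) - (Y x - Ab.mulVec (iv n)) =
        (x - Y x + Ab.mulVec (iv n)) + M.mulVec (iv (e n)) by abel, hubp _ _ ⟨e n, rfl⟩]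
    congr 1; abel
  have hexp : ∀ m, Measurable fun x : Fin 2 → ℝ =>
      Complex.exp (-(dot2 (B.mulVec (iv m)) x : ℝ) * Complex.I) := by
    intro m
    have := measurable_dot2 (B.mulVec (iv m))
    fun_prop
  have hexpn : ∀ m (x : Fin 2 → ℝ),
      ‖Complex.exp (-(dot2 (B.mulVec (iv m)) x : ℝ) * Complex.I)‖ = 1 := by
    intro m x
    rw [← Complex.ofReal_neg, Complex.norm_exp_ofReal_mul_I]
  let g : (Fin 2 → ℤ) → 𝓐a → 𝓐b → (Fin 2 → ℝ) → ℂ := fun m a b x =>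
    Complex.exp (-(dot2 (B.mulVec (iv m)) x : ℝ) * Complex.I) * (f a b x : ℂ)
  have hgm : ∀ m a b, Measurable (g m a b) := fun m a b =>
    (hexp m).mul (Complex.measurable_ofReal.comp (hf a b).1)
  have hgi : ∀ m a b, Integrable (g m a b) := fun m a b =>
    (hf a b).2.ofReal.bdd_mul (c := 1) (hexp m).aestronglyMeasurable
      (Eventually.of_forall fun x => (hexpn m x).le)
  have hgper : ∀ m a b x, ∑' n, g m a b (x + M.mulVec (iv n)) =
      Complex.exp (-(dot2 (B.mulVec (iv m)) x : ℝ) * Complex.I) *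
        ((∑' n, f a b (x + M.mulVec (iv n)) : ℝ) : ℂ) := by
    intro m a b x
    rw [Complex.ofReal_tsum, ← tsum_mul_left]
    refine tsum_congr fun n => ?_
    simp only [g]
    congr 1
    obtain ⟨k, hk⟩ := hB m n
    rw [dot2_add, hk, Complex.exp_eq_exp_iff_exists_int]
    refine ⟨-k, ?_⟩
    push_cast
    ring
  have hU := fun m a b => unfold_main M hM (g m a b) (hgm m a b) (hgi m a b)
  have hΦ : ∀ m x, Complex.exp (-(dot2 (B.mulVec (iv m)) x : ℝ) * Complex.I) *
            (PsiPair Aa Ab w τa τb ua ub x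
              (D.mulVec x + (Ab * Aa⁻¹).mulVec γa - γb) : ℂ) =
      (((2 * |Aa.det|)⁻¹ : ℝ) : ℂ) * ∑ a, ∑ b, ∑' n, g m a b (x + M.mulVec (iv n)) := by
    intro m x
    simp only [hgper, hPsi]
    push_cast
    simp only [Finset.mul_sum]
    refine Finset.sum_congr rfl fun a _ => Finset.sum_congr rfl fun b _ => by ring
  have hfU : ∀ a b, IntegrableOn (fun x => ∑' n, f a b (x + M.mulVec (iv n))) (cell M) := by
    intro a b
    have h1 := (unfold_main M hM (fun x => (f a b x : ℂ))
      (Complex.measurable_ofReal.comp (hf a b).1) (hf a b).2.ofReal).1.re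
    simp only [← Complex.ofReal_tsum, RCLike.re_to_complex, Complex.ofReal_re] at h1
    exact h1
  refine ⟨?_, fun m => ?_⟩
  · simp only [hPsi]
    exact Integrable.const_mul (integrable_finsetSum _ fun a _ =>
      integrable_finsetSum _ fun b _ => hfU a b) _
  · simp only [hΦ]
    rw [setAverage_eq, volume_cell, integral_const_mul, integral_finsetSum _ fun a _ =>
      integrable_finsetSum _ fun b _ => (hU m a b).1]
    have hsub : ∀ a b, ∫ x : Fin 2 → ℝ,
              Complex.exp (-(dot2 (B.mulVec (iv m)) (Aa.mulVec x + γa) : ℝ) * Complex.I) *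
                (w a b
                  (emb (Aa.mulVec x + γa) + emb (τa a) + ua (Aa.mulVec x + γa) a -
                    emb (Ab.mulVec x + γb) - emb (τb b) - ub (Ab.mulVec x + γb) b) : ℂ) =
        ((|Aa.det|⁻¹ : ℝ) : ℂ) * ∫ x, g m a b x := by
      intro a b
      rw [← affine_int Aa hAa γa]
      congr 1
      ext x
      have hYx : Y (Aa.mulVec x + γa) = Aa.mulVec x + γa - (Ab.mulVec x + γb) := by
        simp only [Y, hc, hD, Matrix.sub_mulVec, Matrix.one_mulVec, Matrix.mulVec_add]
        rw [← Matrix.mulVec_mulVec (Aa.mulVec x) Ab, inv_mul_vec Aa hAa]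
        abel
      simp only [g, f, h]
      rw [hYx, sub_sub_cancel, emb_sub]
      congr 3
      abel
    simp only [hsub]
    have : ∀ a, ∫ x in cell M, ∑ b, ∑' n, g m a b (x + M.mulVec (iv n)) =
        ∑ b, ∫ x, g m a b x := by
      intro a
      rw [integral_finsetSum _ fun b _ => (hU m a b).1]
      exact Finset.sum_congr rfl fun b _ => (hU m a b).2
    simp only [this, ← Finset.mul_sum]
    rw [Complex.real_smul]
    push_cast
    simp only [mul_inv]
    ring

theorem le_sup_sup {𝓐 : Type} [Fintype 𝓐] (u : (Fin 2 → ℝ) → 𝓐 → Fin 3 → ℝ)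
    (hu : ∃ C : ℝ, ∀ x α, norm3 (u x α) ≤ C) (x : Fin 2 → ℝ) (a : 𝓐) :
    |u x a 2| ≤ ⨆ x : Fin 2 → ℝ, ⨆ α : 𝓐, |u x α 2| := by
  obtain ⟨C, hC⟩ := hu
  have : Nonempty 𝓐 := ⟨a⟩
  have hb : ∀ x α, |u x α 2| ≤ C := fun x α => (abs_le_norm3 _ _).trans (hC x α)
  refine (le_ciSup (f := fun α => |u x α 2|) ⟨C, ?_⟩ a).trans
    (le_ciSup (f := fun x => ⨆ α : 𝓐, |u x α 2|) ⟨C, ?_⟩ x)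
  · rintro _ ⟨α, rfl⟩; exact hb x α
  · rintro _ ⟨y, rfl⟩; exact ciSup_le fun α => hb y α

/-- Lemma: Fourier coefficients of the diagonal interlayer site potential. -/
theorem site_potential_fourier (θ q r : ℝ) (hq : 0 < q) (hr : 1 < r)
    (A A1 A2 B1 B2 BM AM D1 D2 : Matrix (Fin 2) (Fin 2) ℝ)
    (hA : IsUnit A.det)
    (hA1 : A1 = (Real.sqrt q)⁻¹ • (Rot (-(θ / 2)) * A))
    (hA2 : A2 = Real.sqrt q • (Rot (θ / 2) * A))
    (hB1 : B1 = recip A1) (hB2 : B2 = recip A2)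
    (hBM : BM = B1 - B2) (hBMinv : IsUnit BM.det)
    (hAM : AM = recip BM)
    (hD1 : D1 = 1 - A2 * A1⁻¹) (hD2 : D2 = 1 - A1 * A2⁻¹)
    (hD1inv : IsUnit D1.det) (hD2inv : IsUnit D2.det)
    (𝓐1 𝓐2 : Type) [Fintype 𝓐1] [Fintype 𝓐2] [Nonempty 𝓐1] [Nonempty 𝓐2]
    (τ1 : 𝓐1 → Fin 2 → ℝ) (τ2 : 𝓐2 → Fin 2 → ℝ)
    (u1 : (Fin 2 → ℝ) → 𝓐1 → Fin 3 → ℝ) (u2 : (Fin 2 → ℝ) → 𝓐2 → Fin 3 → ℝ)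
    (γ1 γ2 : Fin 2 → ℝ) (hγ1 : γ1 ∈ cell A1) (hγ2 : γ2 ∈ cell A2)
    (hu1meas : ∀ α, Measurable fun x => u1 x α)
    (hu2meas : ∀ α, Measurable fun x => u2 x α)
    (hu1 : ∃ C : ℝ, ∀ x α, norm3 (u1 x α) ≤ C)
    (hu2 : ∃ C : ℝ, ∀ x α, norm3 (u2 x α) ≤ C)
    (hu1per : ∀ (x : Fin 2 → ℝ), ∀ rM ∈ lat AM, ∀ α, u1 (x + rM) α = u1 x α)
    (hu2per : ∀ (x : Fin 2 → ℝ), ∀ rM ∈ lat AM, ∀ α, u2 (x + rM) α = u2 x α)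
    (v : 𝓐1 → 𝓐2 → (Fin 3 → ℝ) → ℝ)
    (hvmeas : ∀ α1 α2, Measurable (v α1 α2))
    (hveven : ∀ α1 α2 z, v α1 α2 (-z) = v α1 α2 z)
    -- v ∈ L^∞_{2r}(ℝ² × [−L_u^z, L_u^z])
    (hv : ∀ α1 α2, ∃ C : ℝ, ∀ x ∈ slab
        ((⨆ a1 : 𝓐1, ⨆ a2 : 𝓐2, norm2 (τ1 a1 - τ2 a2)) +
          (⨆ x : Fin 2 → ℝ, ⨆ α : 𝓐1, |u1 x α 2|) +
          (⨆ x : Fin 2 → ℝ, ⨆ α : 𝓐2, |u2 x α 2|)),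
      jap3 x ^ (2 * r) * |v α1 α2 x| ≤ C) :
    -- Φ̄^{(inter)}_{j,γ}[u] ∈ L¹(Γ_𝓜), j = 1, 2
    (IntegrableOn (fun x => PsiPair A1 A2 v τ1 τ2 u1 u2 x
        (D1.mulVec x + (A2 * A1⁻¹).mulVec γ1 - γ2)) (cell AM) ∧
     IntegrableOn (fun x => PsiPair A2 A1 (fun α2 α1 z => v α1 α2 z) τ2 τ1 u2 u1 x
        (D2.mulVec x + (A1 * A2⁻¹).mulVec γ2 - γ1)) (cell AM)) ∧
    -- Fourier coefficients, j = 1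
    (∀ m : Fin 2 → ℤ,
      (⨍ x in cell AM,
          Complex.exp (-(dot2 (BM.mulVec (iv m)) x : ℝ) * Complex.I) *
            (PsiPair A1 A2 v τ1 τ2 u1 u2 x
              (D1.mulVec x + (A2 * A1⁻¹).mulVec γ1 - γ2) : ℂ)) =
        ((2 * |AM.det| : ℝ) : ℂ)⁻¹ *
          ∑ α1 : 𝓐1, ∑ α2 : 𝓐2,
            ∫ x : Fin 2 → ℝ,
              Complex.exp (-(dot2 (BM.mulVec (iv m)) (A1.mulVec x + γ1) : ℝ) * Complex.I) *
                (v α1 α2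
                  (emb (A1.mulVec x + γ1) + emb (τ1 α1) + u1 (A1.mulVec x + γ1) α1 -
                    emb (A2.mulVec x + γ2) - emb (τ2 α2) - u2 (A2.mulVec x + γ2) α2) : ℂ)) ∧
    -- Fourier coefficients, j = 2
    (∀ m : Fin 2 → ℤ,
      (⨍ x in cell AM,
          Complex.exp (-(dot2 (BM.mulVec (iv m)) x : ℝ) * Complex.I) *
            (PsiPair A2 A1 (fun α2 α1 z => v α1 α2 z) τ2 τ1 u2 u1 x
              (D2.mulVec x + (A1 * A2⁻¹).mulVec γ2 - γ1) : ℂ)) =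
        ((2 * |AM.det| : ℝ) : ℂ)⁻¹ *
          ∑ α1 : 𝓐1, ∑ α2 : 𝓐2,
            ∫ x : Fin 2 → ℝ,
              Complex.exp (-(dot2 (BM.mulVec (iv m)) (A2.mulVec x + γ2) : ℝ) * Complex.I) *
                (v α1 α2
                  (emb (A1.mulVec x + γ1) + emb (τ1 α1) + u1 (A1.mulVec x + γ1) α1 -
                    emb (A2.mulVec x + γ2) - emb (τ2 α2) - u2 (A2.mulVec x + γ2) α2) : ℂ)) ∧
    -- equality of the averages for j = 1 and j = 2
    (⨍ x in cell AM, PsiPair A1 A2 v τ1 τ2 u1 u2 x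
        (D1.mulVec x + (A2 * A1⁻¹).mulVec γ1 - γ2)) =
      (⨍ x in cell AM, PsiPair A2 A1 (fun α2 α1 z => v α1 α2 z) τ2 τ1 u2 u1 x
        (D2.mulVec x + (A1 * A2⁻¹).mulVec γ2 - γ1)) := by
  have hdetRot : ∀ φ, (Rot φ).det = 1 := by
    intro φ
    rw [Rot, Matrix.det_fin_two_of]
    nlinarith [Real.sin_sq_add_cos_sq φ]
  have hsq : Real.sqrt q ≠ 0 := (Real.sqrt_pos.2 hq).ne'
  have hA1u : IsUnit A1.det := by
    rw [hA1, Matrix.det_smul, Matrix.det_mul, hdetRot, one_mul]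
    exact (IsUnit.mk0 _ (pow_ne_zero _ (inv_ne_zero hsq))).mul hA
  have hA2u : IsUnit A2.det := by
    rw [hA2, Matrix.det_smul, Matrix.det_mul, hdetRot, one_mul]
    exact (IsUnit.mk0 _ (pow_ne_zero _ hsq)).mul hA
  have h2π : (2 * π) ≠ 0 := by positivity
  have hBA : BMᵀ * AM = (2 * π) • (1 : Matrix (Fin 2) (Fin 2) ℝ) := by
    rw [hAM, recip, Matrix.mul_smul, ← Matrix.transpose_mul, Matrix.nonsing_inv_mul _ hBMinv,
      Matrix.transpose_one]
  have hX : (A1⁻¹ - A2⁻¹) * AM = 1 := by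
    have h1 : BMᵀ = (2 * π) • (A1⁻¹ - A2⁻¹) := by
      rw [hBM, hB1, hB2, recip, recip, ← smul_sub, ← Matrix.transpose_sub, Matrix.transpose_smul,
        Matrix.transpose_transpose]
    rw [h1, Matrix.smul_mul] at hBA
    exact smul_right_injective _ h2π hBA
  have hAMu : IsUnit AM.det := by
    have := congrArg Matrix.det hX
    rw [Matrix.det_mul, Matrix.det_one] at this
    exact IsUnit.of_mul_eq_one_right _ this
  have hD1M : D1 * AM = -A2 := by
    have : D1 = -(A2 * (A1⁻¹ - A2⁻¹)) := by
      rw [hD1, Matrix.mul_sub, Matrix.mul_nonsing_inv _ hA2u, neg_sub]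
    rw [this, Matrix.neg_mul, Matrix.mul_assoc, hX, Matrix.mul_one]
  have hD2M : D2 * AM = A1 := by
    have : D2 = A1 * (A1⁻¹ - A2⁻¹) := by
      rw [hD2, Matrix.mul_sub, Matrix.mul_nonsing_inv _ hA1u]
    rw [this, Matrix.mul_assoc, hX, Matrix.mul_one]
  have hB : ∀ m n, ∃ k : ℤ, dot2 (BM.mulVec (iv m)) (AM.mulVec (iv n)) = k * (2 * π) := by
    intro m n
    refine ⟨∑ i, m i * n i, ?_⟩
    have h1 : dot2 (BM.mulVec (iv m)) (AM.mulVec (iv n)) =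
        (iv m) ⬝ᵥ ((BMᵀ * AM).mulVec (iv n)) := by
      rw [← Matrix.mulVec_mulVec, Matrix.dotProduct_mulVec, Matrix.vecMul_transpose]
      rfl
    rw [h1, hBA, Matrix.smul_mulVec, Matrix.one_mulVec, dotProduct_smul, smul_eq_mul, mul_comm]
    simp [dotProduct, iv]
  set L := ((⨆ a1 : 𝓐1, ⨆ a2 : 𝓐2, norm2 (τ1 a1 - τ2 a2)) +
          (⨆ x : Fin 2 → ℝ, ⨆ α : 𝓐1, |u1 x α 2|) +
          (⨆ x : Fin 2 → ℝ, ⨆ α : 𝓐2, |u2 x α 2|)) with hLdef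
  have hL1 := le_sup_sup u1 hu1
  have hL2 := le_sup_sup u2 hu2
  have hL0 : 0 ≤ ⨆ a1 : 𝓐1, ⨆ a2 : 𝓐2, norm2 (τ1 a1 - τ2 a2) :=
    Real.iSup_nonneg fun a => Real.iSup_nonneg fun b => Real.sqrt_nonneg _
  have c1 := core r hr A1 A2 D1 AM BM hA1u hD1 hD1inv hAMu (Equiv.refl _)
    (fun n => by rw [Matrix.mulVec_mulVec, hD1M, Matrix.neg_mulVec]; rfl) hB τ1 τ2 u1 u2 γ1 γ2
    hu1meas hu2meas hu1 hu2 hu1per hu2per v hvmeas L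
    (fun x y a b => by have := hL1 x a; have := hL2 y b; linarith) hv
  have c2 := core r hr A2 A1 D2 AM BM hA2u hD2 hD2inv hAMu (Equiv.neg _)
    (fun n => by
      have : iv (-n) = - iv n := by ext i; simp [iv]
      rw [Matrix.mulVec_mulVec, hD2M, Equiv.neg_apply, this, Matrix.mulVec_neg]) hB τ2 τ1 u2 u1 γ2 γ1
    hu2meas hu1meas hu2 hu1 hu2per hu1per (fun a b z => v b a z) (fun a b => hvmeas b a) L
    (fun x y a b => by have := hL1 y b; have := hL2 x a; linarith) (fun a b => hv b a)
  have f1 := c1.2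
  have f2 : ∀ m : Fin 2 → ℤ,
      (⨍ x in cell AM,
          Complex.exp (-(dot2 (BM.mulVec (iv m)) x : ℝ) * Complex.I) *
            (PsiPair A2 A1 (fun α2 α1 z => v α1 α2 z) τ2 τ1 u2 u1 x
              (D2.mulVec x + (A1 * A2⁻¹).mulVec γ2 - γ1) : ℂ)) =
        ((2 * |AM.det| : ℝ) : ℂ)⁻¹ *
          ∑ α1 : 𝓐1, ∑ α2 : 𝓐2,
            ∫ x : Fin 2 → ℝ,
              Complex.exp (-(dot2 (BM.mulVec (iv m)) (A2.mulVec x + γ2) : ℝ) * Complex.I) *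
                (v α1 α2
                  (emb (A1.mulVec x + γ1) + emb (τ1 α1) + u1 (A1.mulVec x + γ1) α1 -
                    emb (A2.mulVec x + γ2) - emb (τ2 α2) - u2 (A2.mulVec x + γ2) α2) : ℂ) := by
    intro m
    rw [c2.2 m, Finset.sum_comm]
    congr 1
    refine Finset.sum_congr rfl fun a _ => Finset.sum_congr rfl fun b _ => ?_
    congr 1
    ext x
    rw [← hveven]
    congr 3
    abel
  refine ⟨⟨c1.1, c2.1⟩, f1, f2, ?_⟩
  have z1 := f1 0
  have z2 := f2 0
  have hz : ∀ x, dot2 (BM.mulVec (iv 0)) x = 0 := by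
    intro x
    have : iv 0 = 0 := by ext i; simp [iv]
    rw [this, Matrix.mulVec_zero]; simp [dot2]
  simp only [hz, Complex.ofReal_zero, neg_zero, zero_mul, Complex.exp_zero, one_mul] at z1 z2
  have z := z1.trans z2.symm
  rw [setAverage_eq, setAverage_eq, integral_complex_ofReal, integral_complex_ofReal,
    Complex.real_smul, Complex.real_smul, ← Complex.ofReal_mul, ← Complex.ofReal_mul,
    Complex.ofReal_inj] at z
  rw [setAverage_eq, setAverage_eq, smul_eq_mul, smul_eq_mul]
  exact z


end
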